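/- Let ψ(x) = −x + Σ_{k=1}^∞ [ (−1)^{k+1}(6k+1) x^{(6k+1)²} + (−1)^{k}(6k−1) x^{(6k−1)²} ]. Then for every complex number x with |x| < 1, one has ψ(x) = − x · ∏_{n=1}^∞ (1 − x^{8n})³ − 3 x⁹ · ∏_{n=1}^∞ (1 − x^{72n})³. (Equivalently, writing q = x^{24}, ψ(q) = −(η(q^{1/3})³ + 3 η(q³)³).) -/

import Mathlib

open scoped BigOperators

/-- The coefficient `ψ(x) = −x + Σ_{k=1}^∞ [(−1)^{k+1}(6k+1) x^{(6k+1)²}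
+ (−1)^{k}(6k−1) x^{(6k−1)²}]` of (minus) `xyz` in the open Gromov–Witten
potential of `ℙ¹_{3,3,3}` (summation reindexed by `k = j + 1`). -/
noncomputable def psi333 (x : ℂ) : ℂ :=
  -x + ∑' j : ℕ,
    ((-1 : ℂ) ^ (j + 2) * (6 * (j : ℂ) + 7) * x ^ ((6 * j + 7) ^ 2)
      + (-1 : ℂ) ^ (j + 1) * (6 * (j : ℂ) + 5) * x ^ ((6 * j + 5) ^ 2))


/-!
Jacobi's identity `∏ (1 - qⁿ)³ = ∑ (-1)ᵐ (2m + 1) q^(m(m+1)/2)` turns `η(x⁸)³` into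
`∑ (-1)ᵐ (2m + 1) x^((2m+1)²)`. The terms with `m ≡ 1 (mod 3)` are those whose `2m + 1` is
divisible by `3`, and they add up to `-3 η(x⁷²)³`; the other two residue classes make up `-ψ`.

Jacobi's identity is the limit, as `n → ∞`, of a polynomial identity. With
`(1 - z⁻¹) ∏_{i=1}^n (1 - z qⁱ)(1 - z⁻¹ qⁱ) = ∑ aₙ(m) zᵐ`, the derivative at `z = 1` is
`∑ m aₙ(m) = ∏_{i=1}^n (1 - qⁱ)²`, and the symmetry `aₙ(-1-m) = -aₙ(m)` folds the sum over `ℤ`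
into `∑_{m ≥ 0} (2m + 1) aₙ(m)`.
-/

open Finset Filter Topology

section PolynomialIdentity

variable {R : Type*} [CommRing R]

/-- The `q`-Pochhammer symbol `(q; q)_n = ∏_{i=1}^n (1 - qⁱ)`. -/
def qPochhammer (q : R) (n : ℕ) : R := ∏ i ∈ range n, (1 - q ^ (i + 1))

theorem qPochhammer_succ (q : R) (n : ℕ) :
    qPochhammer q (n + 1) = qPochhammer q n * (1 - q ^ (n + 1)) :=
  prod_range_succ _ n

/-- The Gaussian binomial coefficient. It is defined by the `q`-Pascal rule, so that it makes sense
in every commutative ring, and vanishes for `n < k`. -/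
def qBinomial (q : R) : ℕ → ℕ → R
  | _, 0 => 1
  | 0, _ + 1 => 0
  | n + 1, k + 1 => qBinomial q n k + q ^ (k + 1) * qBinomial q n (k + 1)

@[simp]
theorem qBinomial_zero_right (q : R) (n : ℕ) : qBinomial q n 0 = 1 := by
  cases n <;> rfl

theorem qBinomial_succ_succ (q : R) (n k : ℕ) :
    qBinomial q (n + 1) (k + 1) = qBinomial q n k + q ^ (k + 1) * qBinomial q n (k + 1) := rfl

theorem qBinomial_eq_zero_of_lt (q : R) {n k : ℕ} (h : n < k) : qBinomial q n k = 0 := by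
  induction n generalizing k with
  | zero => cases k with
    | zero => omega
    | succ k => rfl
  | succ n ih => cases k with
    | zero => omega
    | succ k => rw [qBinomial_succ_succ, ih (by omega), ih (by omega), mul_zero, add_zero]

@[simp]
theorem qBinomial_self (q : R) (n : ℕ) : qBinomial q n n = 1 := by
  induction n with
  | zero => rfl
  | succ n ih =>
    rw [qBinomial_succ_succ, ih, qBinomial_eq_zero_of_lt q n.lt_succ_self, mul_zero, add_zero]

theorem pow_mul_pow_sub_mul_qBinomial (q : R) (n k : ℕ) :
    q ^ k * (q ^ (n - k) * qBinomial q n k) = q ^ n * qBinomial q n k := by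
  rcases lt_or_ge n k with h | h
  · simp only [qBinomial_eq_zero_of_lt q h, mul_zero]
  · rw [← mul_assoc, pow_mul_pow_sub q h]

theorem qBinomial_succ_succ' (q : R) (n k : ℕ) :
    qBinomial q (n + 1) (k + 1) = q ^ (n - k) * qBinomial q n k + qBinomial q n (k + 1) := by
  induction n generalizing k with
  | zero => cases k <;> simp [qBinomial]
  | succ n ih =>
    cases k with
    | zero =>
      have hrec (m : ℕ) : qBinomial q (m + 1) 1 = 1 + q * qBinomial q m 1 := by
        simpa using qBinomial_succ_succ q m 0
      have hih : qBinomial q (n + 1) 1 = q ^ n + qBinomial q n 1 := by simpa using ih 0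
      simp only [zero_add, Nat.sub_zero, qBinomial_zero_right]
      linear_combination hrec (n + 1) + q * hih - hrec n
    | succ k =>
      have hmid : q ^ (n - k) * (q ^ (k + 1) * qBinomial q n (k + 1))
          = q ^ (n + 1) * qBinomial q n (k + 1) := by
        rcases lt_or_ge n k with h | h
        · simp only [qBinomial_eq_zero_of_lt q (h.trans k.lt_succ_self), mul_zero]
        · rw [← mul_assoc, ← pow_add, show n - k + (k + 1) = n + 1 by omega]
      rw [Nat.add_sub_add_right]
      linear_combination qBinomial_succ_succ q (n + 1) (k + 1) + ih k + q ^ (k + 2) * ih (k + 1)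
        - q ^ (n - k) * qBinomial_succ_succ q n k - qBinomial_succ_succ q n (k + 1)
        + q * pow_mul_pow_sub_mul_qBinomial q n (k + 1) - hmid

theorem qBinomial_symm_add (q : R) (a b : ℕ) : qBinomial q (a + b) a = qBinomial q (a + b) b := by
  induction a generalizing b with
  | zero => simp
  | succ a iha =>
    induction b with
    | zero => simp
    | succ b ihb =>
      rw [show a + 1 + (b + 1) = a + (b + 1) + 1 by ring, qBinomial_succ_succ, iha,
        qBinomial_succ_succ', show a + (b + 1) = a + 1 + b by ring, ihb,
        show a + 1 + b - b = a + 1 by omega]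
      ring

theorem qBinomial_add_mul_qPochhammer (q : R) (a b : ℕ) :
    qBinomial q (a + b) a * (qPochhammer q a * qPochhammer q b) = qPochhammer q (a + b) := by
  induction a generalizing b with
  | zero => simp [qPochhammer]
  | succ a iha =>
    induction b with
    | zero => simp [qPochhammer]
    | succ b ihb =>
      have hab : a + (b + 1) = a + 1 + b := by ring
      have iha' := iha (b + 1)
      rw [hab] at iha'
      rw [show a + 1 + (b + 1) = a + 1 + b + 1 by ring, qBinomial_succ_succ,
        qPochhammer_succ q (a + 1 + b)]
      calc
        _ = qBinomial q (a + 1 + b) a * (qPochhammer q a * qPochhammer q (b + 1))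
              * (1 - q ^ (a + 1))
            + q ^ (a + 1) * (1 - q ^ (b + 1))
              * (qBinomial q (a + 1 + b) (a + 1) * (qPochhammer q (a + 1) * qPochhammer q b)) := by
          rw [qPochhammer_succ q a, qPochhammer_succ q b]
          ring
        _ = _ := by
          rw [iha', ihb]
          ring

theorem qBinomial_add_two_add_two (q : R) (n k : ℕ) :
    qBinomial q (n + 2) (k + 2) = q ^ (n - k) * qBinomial q n k
      + (1 + q ^ (n + 1)) * qBinomial q n (k + 1) + q ^ (k + 2) * qBinomial q n (k + 2) := by
  linear_combination qBinomial_succ_succ q (n + 1) (k + 1) + qBinomial_succ_succ' q n k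
    + q ^ (k + 2) * qBinomial_succ_succ' q n (k + 1)
    + q * pow_mul_pow_sub_mul_qBinomial q n (k + 1)

/-- The coefficient of `zᵐ`, for `m ≥ 0`, in the finite Jacobi product
`(1 - z⁻¹) ∏_{i=1}^n (1 - z qⁱ)(1 - z⁻¹ qⁱ)`; here `(m + 1).choose 2` is `m(m+1)/2`. -/
def jacobiCoeff (q : R) (n m : ℕ) : R :=
  (-1) ^ m * q ^ (m + 1).choose 2 * qBinomial q (2 * n + 1) (n + 1 + m)

theorem jacobiCoeff_eq_zero_of_lt (q : R) {n m : ℕ} (h : n < m) : jacobiCoeff q n m = 0 := by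
  rw [jacobiCoeff, qBinomial_eq_zero_of_lt q (by omega), mul_zero]

theorem add_two_choose_two (m : ℕ) : (m + 2).choose 2 = (m + 1).choose 2 + (m + 1) := by
  rw [Nat.choose_succ_succ', Nat.choose_one_right, add_comm]

/-- This recursion and the next express multiplication of the finite Jacobi product by
`(1 - z qⁿ⁺¹)(1 - z⁻¹ qⁿ⁺¹)`; here the neighbour of index `-1` is `-jacobiCoeff q n 0`. -/
theorem jacobiCoeff_succ_zero (q : R) (n : ℕ) :
    jacobiCoeff q (n + 1) 0 = (1 + q ^ (2 * n + 2)) * jacobiCoeff q n 0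
      - q ^ (n + 1) * (jacobiCoeff q n 1 - jacobiCoeff q n 0) := by
  have hsymm : qBinomial q (2 * n + 1) n = qBinomial q (2 * n + 1) (n + 1) := by
    rw [show 2 * n + 1 = n + (n + 1) by ring, qBinomial_symm_add]
  have hrec := qBinomial_add_two_add_two q (2 * n + 1) n
  rw [hsymm, show 2 * n + 1 - n = n + 1 by omega] at hrec
  simp only [jacobiCoeff, add_zero, show 2 * (n + 1) + 1 = 2 * n + 1 + 2 by ring, hrec]
  simp only [pow_zero, Nat.choose, add_zero, mul_one, one_mul, pow_one, neg_mul]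
  ring

theorem jacobiCoeff_succ_succ (q : R) (n m : ℕ) :
    jacobiCoeff q (n + 1) (m + 1) = (1 + q ^ (2 * n + 2)) * jacobiCoeff q n (m + 1)
      - q ^ (n + 1) * (jacobiCoeff q n m + jacobiCoeff q n (m + 2)) := by
  have hrec := qBinomial_add_two_add_two q (2 * n + 1) (n + 1 + m)
  have hlow : q ^ (m + 1) * (q ^ (2 * n + 1 - (n + 1 + m)) * qBinomial q (2 * n + 1) (n + 1 + m))
      = q ^ (n + 1) * qBinomial q (2 * n + 1) (n + 1 + m) := by
    rcases lt_or_ge n m with h | h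
    · rw [qBinomial_eq_zero_of_lt q (by omega)]
      ring
    · rw [← mul_assoc, ← pow_add, show m + 1 + (2 * n + 1 - (n + 1 + m)) = n + 1 by omega]
  simp only [jacobiCoeff, add_two_choose_two, show m + 2 + 1 = m + 1 + 2 by ring,
    show 2 * (n + 1) + 1 = 2 * n + 1 + 2 by ring,
    show n + 1 + 1 + (m + 1) = n + 1 + m + 2 by ring, hrec,
    show n + 1 + (m + 1) = n + 1 + m + 1 by ring, show n + 1 + (m + 2) = n + 1 + m + 2 by ring]
  linear_combination (-1) ^ (m + 1) * q ^ (m + 1).choose 2 * hlow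

/-- Summation by parts, with `f` extended by `f (-1) = -f 0`: the second difference annihilates
`2m + 1`, so only boundary terms remain. -/
theorem sum_odd_mul_add_neighbours (f : ℕ → R) (N : ℕ) :
    (f 1 - f 0) + ∑ m ∈ range N, (2 * m + 3) * (f m + f (m + 2)) =
      2 * ∑ m ∈ range (N + 1), (2 * m + 1) * f m - (2 * N + 3) * f N + (2 * N + 1) * f (N + 1) := by
  induction N with
  | zero =>
    simp only [range_zero, sum_empty, add_zero, zero_add, range_one, sum_singleton, Nat.cast_zero,
      mul_zero, one_mul]
    ring
  | succ N ih =>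
    rw [sum_range_succ, ← add_assoc, ih, sum_range_succ _ (N + 1)]
    push_cast
    ring

theorem sum_odd_mul_jacobiCoeff (q : R) (n : ℕ) :
    ∑ m ∈ range (n + 1), (2 * m + 1) * jacobiCoeff q n m = qPochhammer q n ^ 2 := by
  induction n with
  | zero => simp [jacobiCoeff, qPochhammer]
  | succ n ih =>
    have hvanish : jacobiCoeff q n (n + 1) = 0 := jacobiCoeff_eq_zero_of_lt q (by omega)
    have hsum : ∑ m ∈ range (n + 1 + 1), (2 * m + 1) * jacobiCoeff q n m = qPochhammer q n ^ 2 := by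
      rw [sum_range_succ, ih, hvanish, mul_zero, add_zero]
    have hneighbours := sum_odd_mul_add_neighbours (jacobiCoeff q n) (n + 1)
    rw [hsum, hvanish, jacobiCoeff_eq_zero_of_lt q (show n < n + 1 + 1 by omega)] at hneighbours
    have hpos : ∑ m ∈ range (n + 1), (2 * (m + 1 : ℕ) + 1) * jacobiCoeff q (n + 1) (m + 1)
        = (1 + q ^ (2 * n + 2))
            * ∑ m ∈ range (n + 1), (2 * (m + 1 : ℕ) + 1) * jacobiCoeff q n (m + 1)
          - q ^ (n + 1) * ∑ m ∈ range (n + 1),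
            (2 * m + 3) * (jacobiCoeff q n m + jacobiCoeff q n (m + 2)) := by
      rw [mul_sum, mul_sum, ← sum_sub_distrib]
      refine sum_congr rfl fun m _ => ?_
      rw [jacobiCoeff_succ_succ]
      push_cast
      ring
    calc ∑ m ∈ range (n + 1 + 1), (2 * m + 1) * jacobiCoeff q (n + 1) m
        = (1 + q ^ (2 * n + 2)) * ∑ m ∈ range (n + 1 + 1), (2 * m + 1) * jacobiCoeff q n m
          - q ^ (n + 1) * ((jacobiCoeff q n 1 - jacobiCoeff q n 0)
            + ∑ m ∈ range (n + 1),
              (2 * m + 3) * (jacobiCoeff q n m + jacobiCoeff q n (m + 2))) := by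
          rw [sum_range_succ', sum_range_succ' _ (n + 1), hpos, jacobiCoeff_succ_zero]
          ring
      _ = (1 - q ^ (n + 1)) ^ 2 * qPochhammer q n ^ 2 := by
          rw [hsum, hneighbours]
          ring
      _ = qPochhammer q (n + 1) ^ 2 := by
          rw [qPochhammer_succ]
          ring

end PolynomialIdentity

section JacobiIdentity

variable {𝕜 : Type*} [NormedField 𝕜] {q : 𝕜}

theorem one_sub_pow_succ_ne_zero (hq : ‖q‖ < 1) (n : ℕ) : 1 - q ^ (n + 1) ≠ 0 := by
  have hpow : ‖q ^ (n + 1)‖ < 1 := by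
    simpa only [norm_pow] using pow_lt_one₀ (norm_nonneg q) hq n.succ_ne_zero
  intro h
  rw [← sub_eq_zero.mp h, norm_one] at hpow
  exact hpow.false

theorem qPochhammer_ne_zero (hq : ‖q‖ < 1) (n : ℕ) : qPochhammer q n ≠ 0 :=
  prod_ne_zero_iff.mpr fun i _ => one_sub_pow_succ_ne_zero hq i

theorem qBinomial_add_eq_div (hq : ‖q‖ < 1) (a b : ℕ) :
    qBinomial q (a + b) a = qPochhammer q (a + b) / (qPochhammer q a * qPochhammer q b) :=
  eq_div_of_mul_eq (mul_ne_zero (qPochhammer_ne_zero hq a) (qPochhammer_ne_zero hq b))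
    (qBinomial_add_mul_qPochhammer q a b)

theorem summable_norm_neg_pow_succ (hq : ‖q‖ < 1) : Summable fun n : ℕ => ‖-q ^ (n + 1)‖ := by
  simpa only [norm_neg, norm_pow] using
    (summable_nat_add_iff 1).mpr (summable_geometric_of_lt_one (norm_nonneg q) hq)

theorem le_add_one_choose_two (m : ℕ) : m ≤ (m + 1).choose 2 := by
  cases m with
  | zero => simp
  | succ m => rw [add_two_choose_two]; omega

theorem norm_odd_le (m : ℕ) : ‖(2 * m + 1 : 𝕜)‖ ≤ 2 * m + 1 := by
  simpa using Nat.norm_cast_le (α := 𝕜) (2 * m + 1)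

theorem norm_odd_mul_pow_choose_le (hq : ‖q‖ < 1) (m : ℕ) :
    ‖(2 * m + 1) * ((-1) ^ m * q ^ (m + 1).choose 2)‖ ≤ (2 * m + 1) * ‖q‖ ^ m := by
  simp only [norm_mul, norm_pow, norm_neg, norm_one, one_pow, one_mul]
  have hpow : ‖q‖ ^ (m + 1).choose 2 ≤ ‖q‖ ^ m :=
    pow_le_pow_of_le_one (norm_nonneg q) hq.le (le_add_one_choose_two m)
  exact mul_le_mul (norm_odd_le m) hpow (by positivity) (by positivity)

theorem summable_odd_mul_geometric {r : ℝ} (h₀ : 0 ≤ r) (h₁ : r < 1) :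
    Summable fun m : ℕ => (2 * m + 1) * r ^ m := by
  have hlin := summable_pow_mul_geometric_of_norm_lt_one 1 (by rwa [Real.norm_of_nonneg h₀])
  refine ((hlin.mul_left 2).add (summable_geometric_of_lt_one h₀ h₁)).congr fun m => ?_
  ring

variable [CompleteSpace 𝕜]

theorem multipliable_one_sub_pow_succ (hq : ‖q‖ < 1) :
    Multipliable fun n : ℕ => 1 - q ^ (n + 1) := by
  simp only [sub_eq_add_neg]
  exact multipliable_one_add_of_summable (summable_norm_neg_pow_succ hq)

theorem tprod_one_sub_pow_succ_ne_zero (hq : ‖q‖ < 1) : ∏' n : ℕ, (1 - q ^ (n + 1)) ≠ 0 := by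
  simp only [sub_eq_add_neg]
  refine tprod_one_add_ne_zero_of_summable (fun n => ?_) (summable_norm_neg_pow_succ hq)
  rw [← sub_eq_add_neg]
  exact one_sub_pow_succ_ne_zero hq n

theorem tendsto_qPochhammer (hq : ‖q‖ < 1) :
    Tendsto (qPochhammer q) atTop (𝓝 (∏' n : ℕ, (1 - q ^ (n + 1)))) :=
  (multipliable_one_sub_pow_succ hq).hasProd.tendsto_prod_nat

theorem tendsto_qBinomial_add (hq : ‖q‖ < 1) {ι : Type*} {l : Filter ι} {a b : ι → ℕ}
    (ha : Tendsto a l atTop) (hb : Tendsto b l atTop) :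
    Tendsto (fun i => qBinomial q (a i + b i) (a i)) l (𝓝 (∏' n : ℕ, (1 - q ^ (n + 1)))⁻¹) := by
  have hL := tprod_one_sub_pow_succ_ne_zero hq
  have hP := tendsto_qPochhammer hq
  have hdiv := (hP.comp (ha.atTop_add_atTop hb)).div
    ((hP.comp ha).mul (hP.comp hb)) (mul_ne_zero hL hL)
  rw [div_mul_cancel_left₀ hL] at hdiv
  exact hdiv.congr fun i => (qBinomial_add_eq_div hq _ _).symm

theorem exists_norm_qBinomial_le (hq : ‖q‖ < 1) : ∃ C, ∀ n k, ‖qBinomial q n k‖ ≤ C := by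
  have hP := tendsto_qPochhammer hq
  obtain ⟨A, hA⟩ := hP.norm.bddAbove_range
  obtain ⟨B, hB⟩ := (hP.inv₀ (tprod_one_sub_pow_succ_ne_zero hq)).norm.bddAbove_range
  replace hA (n : ℕ) : ‖qPochhammer q n‖ ≤ A := hA ⟨n, rfl⟩
  replace hB (n : ℕ) : ‖(qPochhammer q n)⁻¹‖ ≤ B := hB ⟨n, rfl⟩
  have hA₀ : 0 ≤ A := (norm_nonneg _).trans (hA 0)
  have hB₀ : 0 ≤ B := (norm_nonneg _).trans (hB 0)
  refine ⟨A * (B * B), fun n k => ?_⟩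
  rcases lt_or_ge n k with h | h
  · rw [qBinomial_eq_zero_of_lt q h, norm_zero]
    positivity
  · obtain ⟨d, rfl⟩ := Nat.exists_eq_add_of_le h
    rw [qBinomial_add_eq_div hq, div_eq_mul_inv, mul_inv, norm_mul, norm_mul]
    gcongr <;> apply_assumption

theorem tendsto_jacobiCoeff (hq : ‖q‖ < 1) (m : ℕ) :
    Tendsto (fun n => jacobiCoeff q n m) atTop
      (𝓝 ((-1) ^ m * q ^ (m + 1).choose 2 * (∏' n : ℕ, (1 - q ^ (n + 1)))⁻¹)) := by
  have hlim := tendsto_qBinomial_add hq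
    (tendsto_atTop_mono (fun n => (by omega : n ≤ n + 1 + m)) tendsto_id) (tendsto_sub_atTop_nat m)
  refine (hlim.const_mul _).congr' ?_
  filter_upwards [eventually_ge_atTop m] with n hmn
  rw [jacobiCoeff, show n + 1 + m + (n - m) = 2 * n + 1 by omega]

theorem hasSum_jacobi_cube (hq : ‖q‖ < 1) :
    HasSum (fun m : ℕ => (2 * m + 1) * ((-1) ^ m * q ^ (m + 1).choose 2))
      ((∏' n : ℕ, (1 - q ^ (n + 1))) ^ 3) := by
  have hL := tprod_one_sub_pow_succ_ne_zero hq
  have hgeom := summable_odd_mul_geometric (norm_nonneg q) hq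
  have hsummable := Summable.of_norm_bounded hgeom (norm_odd_mul_pow_choose_le hq)
  obtain ⟨C, hC⟩ := exists_norm_qBinomial_le hq
  have hbound (n m : ℕ) : ‖(2 * m + 1) * jacobiCoeff q n m‖ ≤ (2 * m + 1) * ‖q‖ ^ m * C := by
    rw [jacobiCoeff, ← mul_assoc, norm_mul]
    exact mul_le_mul (norm_odd_mul_pow_choose_le hq m) (hC _ _) (norm_nonneg _) (by positivity)
  have hfinite (n : ℕ) : ∑' m : ℕ, (2 * m + 1) * jacobiCoeff q n m = qPochhammer q n ^ 2 := by
    rw [← sum_odd_mul_jacobiCoeff, tsum_eq_sum fun m hm => ?_]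
    rw [jacobiCoeff_eq_zero_of_lt q (by simpa using hm), mul_zero]
  have hlim := tendsto_tsum_of_dominated_convergence (hgeom.mul_right C)
    (fun m => (tendsto_jacobiCoeff hq m).const_mul (2 * m + 1 : 𝕜)) (.of_forall hbound)
  simp only [hfinite, ← mul_assoc, tsum_mul_right] at hlim
  have hquot := tendsto_nhds_unique hlim ((tendsto_qPochhammer hq).pow 2)
  have hvalue : ∑' m : ℕ, (2 * m + 1) * ((-1) ^ m * q ^ (m + 1).choose 2) =
      (∏' n : ℕ, (1 - q ^ (n + 1))) ^ 3 := by
    simpa only [mul_assoc, ← pow_succ] using (mul_inv_eq_iff_eq_mul₀ hL).mp hquot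
  exact hvalue ▸ hsummable.hasSum

end JacobiIdentity

section EtaCubed

theorem eight_mul_add_one_choose_two_add_one (m : ℕ) :
    8 * (m + 1).choose 2 + 1 = (2 * m + 1) ^ 2 := by
  induction m with
  | zero => rfl
  | succ m ih =>
    rw [add_two_choose_two]
    linarith

theorem tsum_eq_add_add_mod_three {G : Type*} [AddCommGroup G] [UniformSpace G]
    [IsUniformAddGroup G] [CompleteSpace G] [T0Space G] {f : ℕ → G} (hf : Summable f) :
    ∑' m, f m = ∑' j, f (3 * j) + ∑' j, f (3 * j + 1) + ∑' j, f (3 * j + 2) := by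
  have hresidues : ∑' m, f m = ∑ r : Fin 3, ∑' j, f (r + 3 * j) := Nat.sumByResidueClasses hf 3
  rw [hresidues, Fin.sum_univ_three]
  simp [add_comm]

variable {𝕜 : Type*} [NormedField 𝕜]

/-- The terms of the lacunary expansion of `η(x⁸)³`. -/
def etaCubedTerm (x : 𝕜) (m : ℕ) : 𝕜 := (-1) ^ m * (2 * m + 1) * x ^ (2 * m + 1) ^ 2

theorem etaCubedTerm_three_mul_add_one (x : 𝕜) (j : ℕ) :
    etaCubedTerm x (3 * j + 1) = -3 * etaCubedTerm (x ^ 9) j := by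
  have hsign : (-1 : 𝕜) ^ (3 * j + 1) = -(-1) ^ j := by
    rw [pow_succ, pow_mul]
    norm_num
  rw [etaCubedTerm, etaCubedTerm, hsign, ← pow_mul,
    show (2 * (3 * j + 1) + 1) ^ 2 = 9 * (2 * j + 1) ^ 2 by ring]
  push_cast
  ring

theorem etaCubedTerm_three_mul_succ (x : 𝕜) (j : ℕ) :
    etaCubedTerm x (3 * (j + 1)) = -((-1) ^ (j + 2) * (6 * j + 7) * x ^ (6 * j + 7) ^ 2) := by
  rw [etaCubedTerm, pow_mul, show 2 * (3 * (j + 1)) + 1 = 6 * j + 7 by ring]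
  push_cast
  norm_num
  ring

theorem etaCubedTerm_three_mul_add_two (x : 𝕜) (j : ℕ) :
    etaCubedTerm x (3 * j + 2) = -((-1) ^ (j + 1) * (6 * j + 5) * x ^ (6 * j + 5) ^ 2) := by
  rw [etaCubedTerm, pow_add, pow_mul, show 2 * (3 * j + 2) + 1 = 6 * j + 5 by ring]
  push_cast
  norm_num
  ring

variable [CompleteSpace 𝕜] {x : 𝕜}

theorem hasSum_etaCubedTerm (hx : ‖x‖ < 1) :
    HasSum (etaCubedTerm x) (x * ∏' n : ℕ, (1 - x ^ (8 * (n + 1))) ^ 3) := by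
  have hx8 : ‖x ^ 8‖ < 1 := by
    simpa only [norm_pow] using pow_lt_one₀ (norm_nonneg x) hx (by norm_num)
  have hjacobi := (hasSum_jacobi_cube hx8).mul_left x
  rw [← (multipliable_one_sub_pow_succ hx8).tprod_pow 3] at hjacobi
  simp only [← pow_mul] at hjacobi
  refine hjacobi.congr_fun fun m => ?_
  rw [etaCubedTerm, ← eight_mul_add_one_choose_two_add_one, pow_succ]
  ring

theorem tsum_etaCubedTerm_three_mul_add_one (hx : ‖x‖ < 1) :
    ∑' j, etaCubedTerm x (3 * j + 1) = -3 * x ^ 9 * ∏' n : ℕ, (1 - x ^ (72 * (n + 1))) ^ 3 := by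
  have hx9 : ‖x ^ 9‖ < 1 := by
    simpa only [norm_pow] using pow_lt_one₀ (norm_nonneg x) hx (by norm_num)
  simp only [etaCubedTerm_three_mul_add_one, tsum_mul_left, (hasSum_etaCubedTerm hx9).tsum_eq,
    ← pow_mul, ← mul_assoc, Nat.reduceMul]

theorem psi_eq_eta_cubed_general (hx : ‖x‖ < 1) :
    -x + ∑' j : ℕ, ((-1) ^ (j + 2) * (6 * j + 7) * x ^ ((6 * j + 7) ^ 2)
        + (-1) ^ (j + 1) * (6 * j + 5) * x ^ ((6 * j + 5) ^ 2)) =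
      -x * (∏' n : ℕ, (1 - x ^ (8 * (n + 1))) ^ 3)
        - 3 * x ^ 9 * ∏' n : ℕ, (1 - x ^ (72 * (n + 1))) ^ 3 := by
  have hsum := hasSum_etaCubedTerm hx
  have hsum₀ : Summable fun j => etaCubedTerm x (3 * j) :=
    hsum.summable.comp_injective (mul_right_injective₀ three_ne_zero)
  have hsum₂ : Summable fun j => etaCubedTerm x (3 * j + 2) :=
    hsum.summable.comp_injective fun i j h => by omega
  have hzero : ∑' j, etaCubedTerm x (3 * j) = x + ∑' j, etaCubedTerm x (3 * (j + 1)) := by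
    rw [hsum₀.tsum_eq_zero_add]
    simp [etaCubedTerm]
  have htotal := hsum.tsum_eq
  rw [tsum_eq_add_add_mod_three hsum.summable, hzero, tsum_etaCubedTerm_three_mul_add_one hx]
    at htotal
  have hpsi := ((summable_nat_add_iff 1).mpr hsum₀).tsum_add hsum₂
  simp only [etaCubedTerm_three_mul_succ, etaCubedTerm_three_mul_add_two, ← neg_add,
    tsum_neg] at hpsi htotal
  linear_combination -hpsi - htotal

end EtaCubed

/-- `ψ(x) = −x ∏_{n=1}^∞ (1 − x^{8n})³ − 3x⁹ ∏_{n=1}^∞ (1 − x^{72n})³`,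
i.e. `ψ(q) = −(η(q^{1/3})³ + 3η(q³)³)` with `q = x²⁴`. -/
theorem psi_eq_eta_cubed (x : ℂ) (hx : ‖x‖ < 1) :
    psi333 x = -x * (∏' n : ℕ, (1 - x ^ (8 * (n + 1))) ^ 3)
      - 3 * x ^ 9 * ∏' n : ℕ, (1 - x ^ (72 * (n + 1))) ^ 3 :=
  psi_eq_eta_cubed_general hx
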